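/- arXiv:1505.00617 — 2 statements merged into one kernel-verified Lean document; each statement's English description precedes it below -/
import Mathlib

section
/- Let n ∈ ℕ, let H ⊆ ℝ with |H| ≥ n+2, let ω = (ω_1,…,ω_n) be an n-dimensional positive Chebyshev system over H, and let ω_{n+1} : H → ℝ be such that ω* = (ω_1,…,ω_n,ω_{n+1}) is an (n+1)-dimensional positive Chebyshev system over H. Let m ∈ ℕ with n ≤ m ≤ |H|−1 and let x_0 < ⋯ < x_m be elements of H. Then, for all indices 0 ≤ i_0 < i_1 < ⋯ < i_n ≤ m, there exist constants A_0,…,A_{m-n} ∈ [0,1] with A_0 + ⋯ + A_{m-n} = 1 such that for every function f : {x_0,…,x_m} → ℝ, [x_{i_0},…,x_{i_n}; f]_{ω*} = Σ_{i=0}^{m-n} A_i·[x_i,…,x_{i+n}; f]_{ω*}. -/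
/-- `Phi ω x` is the determinant `det(ωᵢ(xⱼ))` of an `n`-tuple of functions
evaluated at an `n`-tuple of points. -/
noncomputable def Phi {n : ℕ} (ω : Fin n → ℝ → ℝ) (x : Fin n → ℝ) : ℝ :=
  (Matrix.of fun i j => ω i (x j)).det

/-- `ω` is an `n`-dimensional positive Chebyshev system over `H`:
`Phi ω` is positive on all strictly increasing `n`-tuples of elements of `H`. -/
def IsPosChebyshev {n : ℕ} (ω : Fin n → ℝ → ℝ) (H : Set ℝ) : Prop :=
  ∀ x : Fin n → ℝ, StrictMono x → (∀ j, x j ∈ H) → 0 < Phi ω x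

/-- The generalized `ω*`-divided difference `[x₀,…,xₙ; f]_{ω*}`, where
`ω* = (ω₁,…,ωₙ,ω')`:  `Φ_{(ω,f)}(x) / Φ_{ω*}(x)`. -/
noncomputable def divDiff {n : ℕ} (ω : Fin n → ℝ → ℝ) (ω' : ℝ → ℝ) (f : ℝ → ℝ)
    (x : Fin (n + 1) → ℝ) : ℝ :=
  Phi (Fin.snoc ω f) x / Phi (Fin.snoc ω ω') x

/-- Expansion of the determinant along the last row. -/
lemma Phi_snoc_expand {n : ℕ} (ω : Fin n → ℝ → ℝ) (f : ℝ → ℝ) (z : Fin (n + 1) → ℝ) :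
    Phi (Fin.snoc ω f) z =
      ∑ j : Fin (n + 1), (-1) ^ (n + j.1) * f (z j) * Phi ω (fun i => z (j.succAbove i)) := by
  unfold Phi
  rw [Matrix.det_succ_row _ (Fin.last n)]
  refine Finset.sum_congr rfl fun j _ => ?_
  congr 1
  · simp
  · congr 1
    ext a b
    simp

lemma Phi_snoc_self {n : ℕ} (ω : Fin n → ℝ → ℝ) (i : Fin n) (z : Fin (n + 1) → ℝ) :
    Phi (Fin.snoc ω (ω i)) z = 0 := by
  unfold Phi
  refine Matrix.det_zero_of_row_eq (i := i.castSucc) (j := Fin.last n) (Fin.castSucc_lt_last i).ne ?_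
  ext j
  simp

lemma Phi_snoc_sub {n : ℕ} (ω : Fin n → ℝ → ℝ) (f : ℝ → ℝ) (c : Fin n → ℝ)
    (z : Fin (n + 1) → ℝ) :
    Phi (Fin.snoc ω (fun t => f t - ∑ i, c i * ω i t)) z = Phi (Fin.snoc ω f) z := by
  have h : ∑ i, c i * Phi (Fin.snoc ω (ω i)) z = 0 := by simp [Phi_snoc_self]
  rw [← sub_zero (Phi (Fin.snoc ω f) z), ← h]
  simp only [Phi_snoc_expand, Finset.mul_sum]
  rw [Finset.sum_comm, ← Finset.sum_sub_distrib]
  refine Finset.sum_congr rfl fun j _ => ?_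
  rw [mul_sub, sub_mul, Finset.mul_sum, Finset.sum_mul]
  congr 1
  refine Finset.sum_congr rfl fun i _ => ?_
  ring

lemma Phi_snoc_ends {n : ℕ} (hn : 0 < n) (ω : Fin n → ℝ → ℝ) (h : ℝ → ℝ)
    (z : Fin (n + 1) → ℝ) (hz : ∀ j, j ≠ 0 → j ≠ Fin.last n → h (z j) = 0) :
    Phi (Fin.snoc ω h) z = h (z (Fin.last n)) * Phi ω (fun i => z i.castSucc)
      + (-1) ^ n * h (z 0) * Phi ω (fun i => z i.succ) := by
  rw [Phi_snoc_expand, Fintype.sum_eq_add (Fin.last n) 0]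
  · have : ((-1 : ℝ)) ^ (n + n) = 1 := by rw [← two_mul, pow_mul]; simp
    simp [this]
  · intro e
    have := congrArg Fin.val e
    simp at this
    omega
  · rintro j ⟨h1, h2⟩
    rw [hz j h2 h1]; simp

lemma three_term {n : ℕ} (hn : 0 < n) (H : Set ℝ) (ω : Fin n → ℝ → ℝ)
    (hω : IsPosChebyshev ω H) (y : Fin (n + 2) → ℝ) (hy : StrictMono y) (hyH : ∀ i, y i ∈ H)
    (k : Fin (n + 2)) (hk0 : k ≠ 0) (hkl : k ≠ Fin.last (n + 1)) :
    ∃ a b : ℝ, 0 ≤ a ∧ 0 ≤ b ∧ ∀ f : ℝ → ℝ,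
      Phi (Fin.snoc ω f) (fun j => y (k.succAbove j)) =
        a * Phi (Fin.snoc ω f) (fun j => y j.succ) +
        b * Phi (Fin.snoc ω f) (fun j => y j.castSucc) := by
  have hE : 0 < Phi ω (fun i => y i.castSucc.succ) :=
    hω _ (fun i j h => hy (by simpa using h)) (fun _ => hyH _)
  have hA : 0 < Phi ω (fun i => y (k.succAbove i.castSucc)) :=
    hω _ (fun i j h => hy (Fin.strictMono_succAbove k (by simpa using h))) (fun _ => hyH _)
  have hB : 0 < Phi ω (fun i => y (k.succAbove i.succ)) :=
    hω _ (fun i j h => hy (Fin.strictMono_succAbove k (by simpa using h))) (fun _ => hyH _)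
  refine ⟨_ / _, _ / _, (div_pos hA hE).le, (div_pos hB hE).le, fun f => ?_⟩
  obtain ⟨c, hc⟩ : ∃ c : Fin n → ℝ, ∀ j : Fin n,
      f (y j.castSucc.succ) - ∑ i, c i * ω i (y j.castSucc.succ) = 0 := by
    set M : Matrix (Fin n) (Fin n) ℝ := Matrix.of fun i j => ω i (y j.castSucc.succ) with hM
    have hdet : IsUnit M.det := isUnit_iff_ne_zero.mpr hE.ne'
    refine ⟨Matrix.vecMul (fun j => f (y j.castSucc.succ)) M⁻¹, fun j => ?_⟩
    have h1 : Matrix.vecMul (Matrix.vecMul (fun j : Fin n => f (y j.castSucc.succ)) M⁻¹) M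
        = fun j : Fin n => f (y j.castSucc.succ) := by
      rw [Matrix.vecMul_vecMul, Matrix.nonsing_inv_mul _ hdet, Matrix.vecMul_one]
    have h2 := congrFun h1 j
    rw [sub_eq_zero]
    exact h2.symm
  rw [← Phi_snoc_sub ω f c, ← Phi_snoc_sub ω f c, ← Phi_snoc_sub ω f c]
  set h : ℝ → ℝ := fun t => f t - ∑ i, c i * ω i t with hh
  have hv : ∀ j : Fin (n + 2), j ≠ 0 → j ≠ Fin.last (n + 1) → h (y j) = 0 := by
    intro j h0 hl
    obtain ⟨i, rfl⟩ := Fin.exists_succ_eq.mpr h0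
    have : i ≠ Fin.last n := by rintro rfl; exact hl (Fin.succ_last n)
    obtain ⟨i, rfl⟩ := Fin.exists_castSucc_eq.mpr this
    exact hc i
  have e0 : k.succAbove 0 = 0 := Fin.succAbove_ne_zero_zero hk0
  have el : k.succAbove (Fin.last n) = Fin.last (n + 1) := Fin.succAbove_ne_last_last hkl
  rw [Phi_snoc_ends hn ω h (fun j => y (k.succAbove j)), Phi_snoc_ends hn ω h (fun j => y j.succ),
    Phi_snoc_ends hn ω h (fun j => y j.castSucc)]
  · have z1 : h (y (Fin.succ 0)) = 0 := hv _ (Fin.succ_ne_zero _) (by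
      intro e; have := congrArg Fin.val e; simp at this; omega)
    have z2 : h (y (Fin.castSucc (Fin.last n))) = 0 := hv _ (by
      intro e; have := congrArg Fin.val e; simp at this; omega) (Fin.castSucc_lt_last _).ne
    simp only [e0, el, z1, z2, Fin.succ_last, Fin.castSucc_zero, ← Fin.succ_castSucc]
    field_simp
    ring
  · intro j h0 hl
    exact hv _ (fun e => h0 (by simpa using e)) (Fin.castSucc_lt_last _).ne
  · intro j h0 hl
    exact hv _ (Fin.succ_ne_zero _) (fun e => hl (by rw [← Fin.succ_last] at e; simpa using e))
  · intro j h0 hl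
    refine hv _ (fun e => h0 ?_) (fun e => hl ?_)
    · rw [← e0] at e; exact Fin.succAbove_right_injective e
    · rw [← el] at e; exact Fin.succAbove_right_injective e

lemma strictMono_gap {n N : ℕ} (idx : Fin (n + 1) → Fin N) (hidx : StrictMono idx) (d : ℕ) :
    ∀ i j : Fin (n + 1), i.1 + d = j.1 → (idx i).1 + d ≤ (idx j).1 := by
  induction d with
  | zero =>
    intro i j h
    have : i = j := Fin.ext (by omega)
    simp [this]
  | succ d ih =>
    intro i j h
    have h1 := ih i ⟨i.1 + d, by omega⟩ rfl
    have h2 : idx ⟨i.1 + d, by omega⟩ < idx j := hidx (by rw [Fin.lt_def]; simp; omega)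
    rw [Fin.lt_def] at h2
    omega

lemma insert_point {n N : ℕ} (idx : Fin (n + 1) → Fin N) (hidx : StrictMono idx)
    (hd : (idx 0).1 + n < (idx (Fin.last n)).1) :
    ∃ (z : Fin (n + 2) → Fin N) (k : Fin (n + 2)), StrictMono z ∧ k ≠ 0 ∧ k ≠ Fin.last (n + 1) ∧
      ∀ j, z (k.succAbove j) = idx j := by
  classical
  have hci : (Finset.univ.image idx).card = n + 1 := by
    rw [Finset.card_image_of_injective _ hidx.injective]; simp
  obtain ⟨p, hp1, hp2⟩ := Finset.exists_mem_notMem_of_card_lt_card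
    (s := Finset.univ.image idx) (t := Finset.Icc (idx 0) (idx (Fin.last n)))
    (by rw [hci, Fin.card_Icc]; omega)
  have hcs : (insert p (Finset.univ.image idx)).card = n + 2 := by
    rw [Finset.card_insert_of_notMem hp2, hci]
  set S := insert p (Finset.univ.image idx) with hS
  set z := S.orderEmbOfFin hcs with hz
  have hzr : Set.range z = S := Finset.range_orderEmbOfFin S hcs
  obtain ⟨k, hk⟩ : p ∈ Set.range z := by rw [hzr]; simp [hS]
  have hsm : StrictMono (fun j => z (k.succAbove j)) :=
    z.strictMono.comp (Fin.strictMono_succAbove k)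
  have hr : Set.range (fun j => z (k.succAbove j)) = Set.range idx := by
    have : (fun j => z (k.succAbove j)) = z ∘ k.succAbove := rfl
    rw [this, Set.range_comp, Fin.range_succAbove, Set.image_compl_eq_range_sdiff_image z.injective,
      hzr, Set.image_singleton, hk, hS]
    ext q
    simp only [Finset.coe_insert, Finset.coe_image, Finset.coe_univ, Set.image_univ,
      Set.mem_sdiff, Set.mem_insert_iff, Set.mem_singleton_iff]
    constructor
    · rintro ⟨h | h, h'⟩
      · exact absurd h h'
      · exact h
    · intro h
      refine ⟨Or.inr h, ?_⟩
      rintro rfl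
      apply hp2
      simpa using h
  have heq := (StrictMono.range_inj hsm hidx).mp hr
  have hmem : ∀ j, idx j ≠ p := fun j e => hp2 (by simp [← e])
  rw [Finset.mem_Icc] at hp1
  refine ⟨z, k, z.strictMono, ?_, ?_, fun j => congrFun heq j⟩
  · rintro rfl
    have h1 : z (Fin.succAbove 0 0) = idx 0 := congrFun heq 0
    have h2 : z 0 < z (Fin.succAbove 0 0) := z.strictMono (by simp)
    rw [h1, hk] at h2
    exact absurd hp1.1 (not_le.mpr h2)
  · rintro rfl
    have h1 : z (Fin.succAbove (Fin.last (n+1)) (Fin.last n)) = idx (Fin.last n) := congrFun heq _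
    have h2 : z (Fin.succAbove (Fin.last (n+1)) (Fin.last n)) < z (Fin.last (n+1)) :=
      z.strictMono (by simp [Fin.castSucc_lt_last])
    rw [h1, hk] at h2
    exact absurd hp1.2 (not_le.mpr h2)

lemma cone_windows
    (n : ℕ) (hn : 0 < n) (H : Set ℝ) (ω : Fin n → ℝ → ℝ)
    (hω : IsPosChebyshev ω H)
    (m : ℕ) (hnm : n ≤ m)
    (x : Fin (m + 1) → ℝ) (hx : StrictMono x) (hxH : ∀ i, x i ∈ H)
    (w : ∀ (i : Fin (m - n + 1)) (j : Fin (n + 1)), i.1 + j.1 < m + 1) (d : ℕ) :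
    ∀ (idx : Fin (n + 1) → Fin (m + 1)), StrictMono idx →
      (idx (Fin.last n)).1 ≤ (idx 0).1 + n + d →
    ∃ A : Fin (m - n + 1) → ℝ, (∀ i, 0 ≤ A i) ∧
      ∀ f : ℝ → ℝ,
        Phi (Fin.snoc ω f) (fun j => x (idx j)) =
          ∑ i : Fin (m - n + 1), A i *
            Phi (Fin.snoc ω f) (fun j : Fin (n + 1) =>
              x ⟨i.1 + j.1, w i j⟩) := by
  induction d with
  | zero =>
    intro idx hidx hd
    have hl := (idx (Fin.last n)).2
    have hgap := strictMono_gap idx hidx n 0 (Fin.last n) (by simp)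
    have hlt : (idx 0).1 < m - n + 1 := by omega
    refine ⟨Pi.single ⟨(idx 0).1, hlt⟩ 1, fun i => ?_, fun f => ?_⟩
    · by_cases h : i = ⟨(idx 0).1, hlt⟩
      · subst h; simp
      · simp [Pi.single_eq_of_ne h]
    · rw [Finset.sum_eq_single ⟨(idx 0).1, hlt⟩]
      · rw [Pi.single_eq_same, one_mul]
        congr 1
        ext j
        congr 1
        apply Fin.ext
        have g1 := strictMono_gap idx hidx j.1 0 j (by simp)
        have g2 := strictMono_gap idx hidx (n - j.1) j (Fin.last n) (by simp; omega)
        simp only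
        omega
      · intro b _ hb
        simp [Pi.single_eq_of_ne hb]
      · simp
  | succ d ih =>
    intro idx hidx hd
    by_cases hc : (idx (Fin.last n)).1 ≤ (idx 0).1 + n + d
    · exact ih idx hidx hc
    obtain ⟨z, k, hz, hk0, hkl, hzk⟩ := insert_point idx hidx (by omega)
    have e0 : z 0 = idx 0 := by
      rw [← hzk 0, Fin.succAbove_ne_zero_zero hk0]
    have el : z (Fin.last (n + 1)) = idx (Fin.last n) := by
      rw [← hzk (Fin.last n), Fin.succAbove_ne_last_last hkl]
    obtain ⟨a, b, ha, hb, hab⟩ := three_term hn H ω hω (fun i => x (z i)) (hx.comp hz)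
      (fun _ => hxH _) k hk0 hkl
    have h1 : z 0 < z (Fin.succ 0) := hz (Fin.succ_pos _)
    have h2 : z (Fin.castSucc (Fin.last n)) < z (Fin.last (n + 1)) := hz (Fin.castSucc_lt_last _)
    rw [Fin.lt_def] at h1 h2
    obtain ⟨A, hA, hAf⟩ := ih (fun j => z j.succ) (fun i j h => hz (by simpa using h)) (by
      simp only [Fin.succ_last, el]; rw [e0] at h1; omega)
    obtain ⟨B, hB, hBf⟩ := ih (fun j => z j.castSucc) (fun i j h => hz (by simpa using h)) (by
      simp only [Fin.castSucc_zero, e0]; rw [el] at h2; omega)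
    refine ⟨fun i => a * A i + b * B i, fun i => ?_, fun f => ?_⟩
    · exact add_nonneg (mul_nonneg ha (hA i)) (mul_nonneg hb (hB i))
    · have := hab f
      simp only [hzk] at this
      rw [this, hAf f, hBf f, Finset.mul_sum, Finset.mul_sum, ← Finset.sum_add_distrib]
      refine Finset.sum_congr rfl fun i _ => ?_
      ring

/-- **Theorem 1.** For `x₀ < ⋯ < x_m` in `H` and any strictly increasing choice of
indices `i₀ < ⋯ < iₙ`, the divided difference `[x_{i₀},…,x_{iₙ}; f]_{ω*}` is a convex
combination (with coefficients independent of `f`) of the divided differences on the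
consecutive windows `x_i,…,x_{i+n}`, `0 ≤ i ≤ m−n`. -/
theorem divDiff_convexCombination_of_windows
    (n : ℕ) (hn : 0 < n) (H : Set ℝ) (hH : (↑(n + 2) : ℕ∞) ≤ H.encard)
    (ω : Fin n → ℝ → ℝ) (ω' : ℝ → ℝ)
    (hω : IsPosChebyshev ω H) (hωs : IsPosChebyshev (Fin.snoc ω ω') H)
    (m : ℕ) (hnm : n ≤ m) (hm : (↑(m + 1) : ℕ∞) ≤ H.encard)
    (x : Fin (m + 1) → ℝ) (hx : StrictMono x) (hxH : ∀ i, x i ∈ H)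
    (idx : Fin (n + 1) → Fin (m + 1)) (hidx : StrictMono idx) :
    ∃ A : Fin (m - n + 1) → ℝ, (∀ i, A i ∈ Set.Icc (0 : ℝ) 1) ∧ (∑ i, A i = 1) ∧
      ∀ f : ℝ → ℝ,
        divDiff ω ω' f (fun j => x (idx j)) =
          ∑ i : Fin (m - n + 1), A i *
            divDiff ω ω' f (fun j : Fin (n + 1) =>
              x ⟨i.1 + j.1, by have h1 := i.2; have h2 := j.2; omega⟩) := by
  obtain ⟨A, hA, hAf⟩ := cone_windows n hn H ω hω m hnm x hx hxH
    (fun i j => by have h1 := i.2; have h2 := j.2; omega) (m + 1) idx hidx (by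
    have := (idx (Fin.last n)).2; omega)
  have hP : 0 < Phi (Fin.snoc ω ω') (fun j => x (idx j)) :=
    hωs _ (hx.comp hidx) (fun _ => hxH _)
  have hW : ∀ i : Fin (m - n + 1), 0 < Phi (Fin.snoc ω ω') (fun j : Fin (n + 1) =>
      x ⟨i.1 + j.1, by have h1 := i.2; have h2 := j.2; omega⟩) := fun i =>
    hωs _ (fun a b h => hx (by rw [Fin.lt_def] at h ⊢; simpa using h)) (fun _ => hxH _)
  set B : Fin (m - n + 1) → ℝ := fun i => A i * Phi (Fin.snoc ω ω') (fun j : Fin (n + 1) =>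
      x ⟨i.1 + j.1, by have h1 := i.2; have h2 := j.2; omega⟩) /
      Phi (Fin.snoc ω ω') (fun j => x (idx j)) with hBdef
  have hB0 : ∀ i, 0 ≤ B i := fun i => div_nonneg (mul_nonneg (hA i) (hW i).le) hP.le
  have hB1 : ∑ i, B i = 1 := by
    rw [hBdef, ← Finset.sum_div, ← hAf ω', div_self hP.ne']
  refine ⟨B, fun i => ⟨hB0 i, ?_⟩, hB1, fun f => ?_⟩
  · rw [← hB1]
    exact Finset.single_le_sum (fun j _ => hB0 j) (Finset.mem_univ i)
  · unfold divDiff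
    rw [hAf f, Finset.sum_div]
    refine Finset.sum_congr rfl fun i _ => ?_
    have := (hW i).ne'
    simp only [hBdef]
    field_simp
end

section
/- (Generalized Chain Inequality) Let n ∈ ℕ, let H ⊆ ℝ with |H| ≥ n+2, let ω = (ω_1,…,ω_n) be an n-dimensional positive Chebyshev system over H, and let ω_{n+1} : H → ℝ be such that ω* = (ω_1,…,ω_n,ω_{n+1}) is an (n+1)-dimensional positive Chebyshev system over H. Let m ∈ ℕ with n ≤ m ≤ |H|−1 and let x_0 < ⋯ < x_m be elements of H. Then, for all indices 0 ≤ i_0 < i_1 < ⋯ < i_n ≤ m and for every function f : {x_0,…,x_m} → ℝ, min_{0≤i≤m−n} [x_i,…,x_{i+n}; f]_{ω*} ≤ [x_{i_0},…,x_{i_n}; f]_{ω*} ≤ max_{0≤i≤m−n} [x_i,…,x_{i+n}; f]_{ω*}. -/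
theorem Phi_expand {n : ℕ} (ω : Fin n → ℝ → ℝ) (h : ℝ → ℝ) (y : Fin (n + 1) → ℝ) :
    Phi (Fin.snoc ω h : Fin (n + 1) → ℝ → ℝ) y =
      ∑ j : Fin (n + 1), (-1) ^ (n + (j : ℕ)) * h (y j) * Phi ω (fun i => y (j.succAbove i)) := by
  unfold Phi
  rw [Matrix.det_succ_row _ (Fin.last n)]
  refine Finset.sum_congr rfl fun j _ => ?_
  simp only [Matrix.of_apply, Fin.snoc_last, Fin.val_last]
  congr 2
  ext a b
  simp [Matrix.submatrix_apply, Fin.succAbove_last]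

theorem Phi_same {n : ℕ} (ω : Fin n → ℝ → ℝ) (i : Fin n) (y : Fin (n + 1) → ℝ) :
    Phi (Fin.snoc ω (ω i) : Fin (n + 1) → ℝ → ℝ) y = 0 := by
  unfold Phi
  refine Matrix.det_zero_of_row_eq (i := i.castSucc) (j := Fin.last n) (Fin.castSucc_lt_last i).ne ?_
  ext j
  simp

theorem Phi_sub_smul {n : ℕ} (ω : Fin n → ℝ → ℝ) (g h : ℝ → ℝ) (a b : ℝ) (y : Fin (n + 1) → ℝ) :
    Phi (Fin.snoc ω (fun t => a * g t - b * h t) : Fin (n + 1) → ℝ → ℝ) y =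
      a * Phi (Fin.snoc ω g : Fin (n + 1) → ℝ → ℝ) y
        - b * Phi (Fin.snoc ω h : Fin (n + 1) → ℝ → ℝ) y := by
  simp only [Phi_expand, Finset.mul_sum, ← Finset.sum_sub_distrib]
  refine Finset.sum_congr rfl fun j _ => ?_
  ring

theorem Phi_sub_span {n : ℕ} (ω : Fin n → ℝ → ℝ) (g : ℝ → ℝ) (c : Fin n → ℝ)
    (y : Fin (n + 1) → ℝ) :
    Phi (Fin.snoc ω (fun t => g t - ∑ i, c i * ω i t) : Fin (n + 1) → ℝ → ℝ) y =
      Phi (Fin.snoc ω g : Fin (n + 1) → ℝ → ℝ) y := by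
  have key : Phi (Fin.snoc ω (fun t => ∑ i, c i * ω i t) : Fin (n + 1) → ℝ → ℝ) y = 0 := by
    have : Phi (Fin.snoc ω (fun t => ∑ i, c i * ω i t) : Fin (n + 1) → ℝ → ℝ) y =
        ∑ i, c i * Phi (Fin.snoc ω (ω i) : Fin (n + 1) → ℝ → ℝ) y := by
      simp only [Phi_expand, Finset.mul_sum, Finset.sum_mul]
      rw [Finset.sum_comm]
      refine Finset.sum_congr rfl fun j _ => Finset.sum_congr rfl fun i _ => ?_
      ring
    simp [this, Phi_same]
  have := Phi_sub_smul ω g (fun t => ∑ i, c i * ω i t) 1 1 y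
  simpa [key] using this

theorem Phi_step {n : ℕ} (H : Set ℝ) (ω : Fin n → ℝ → ℝ) (hω : IsPosChebyshev ω H)
    (g : ℝ → ℝ) (z : Fin (n + 2) → ℝ) (hz : StrictMono z) (hzH : ∀ i, z i ∈ H)
    (p : Fin (n + 2)) (hp0 : p ≠ 0) (hpl : p ≠ Fin.last (n + 1))
    (h0 : 0 ≤ Phi (Fin.snoc ω g : Fin (n + 1) → ℝ → ℝ) (fun j => z j.succ))
    (hl : 0 ≤ Phi (Fin.snoc ω g : Fin (n + 1) → ℝ → ℝ) (fun j => z j.castSucc)) :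
    0 ≤ Phi (Fin.snoc ω g : Fin (n + 1) → ℝ → ℝ) (fun j => z (p.succAbove j)) := by
  have hpos : ∀ e : Fin n → Fin (n + 2), StrictMono e → 0 < Phi ω (fun i => z (e i)) :=
    fun e he => hω _ (hz.comp he) fun _ => hzH _
  have hint := hpos (fun i => i.castSucc.succ)
    (Fin.strictMono_succ.comp Fin.strictMono_castSucc)
  obtain ⟨c, hc⟩ : ∃ c : Fin n → ℝ, ∀ j : Fin n,
      ∑ i, c i * ω i (z j.castSucc.succ) = g (z j.castSucc.succ) := by
    let A : Matrix (Fin n) (Fin n) ℝ := Matrix.of fun i j => ω i (z j.castSucc.succ)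
    have hA : IsUnit A.det := (ne_of_gt hint).isUnit
    refine ⟨Matrix.vecMul (fun j => g (z j.castSucc.succ)) A⁻¹, fun j => ?_⟩
    have := congrFun (Matrix.vecMul_vecMul (fun j : Fin n => g (z j.castSucc.succ)) A⁻¹ A) j
    rw [Matrix.nonsing_inv_mul _ hA, Matrix.vecMul_one] at this
    exact this
  rw [← Phi_sub_span ω g c] at h0 hl ⊢
  have hh : ∀ j : Fin n, (fun t => g t - ∑ i, c i * ω i t) (z j.castSucc.succ) = 0 := by
    intro j; simp [hc]
  generalize (fun t => g t - ∑ i, c i * ω i t) = h at *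
  have h0' : 0 ≤ h (z (Fin.last (n + 1))) := by
    rw [Phi_expand, Fin.sum_univ_castSucc] at h0
    simp only [hh, mul_zero, zero_mul, Finset.sum_const_zero, zero_add, Fin.succAbove_last,
      Fin.val_last, ← two_mul, pow_mul, Fin.succ_last] at h0
    norm_num at h0
    exact nonneg_of_mul_nonneg_left h0 hint
  have hl' : 0 ≤ (-1) ^ n * h (z 0) := by
    rw [Phi_expand, Fin.sum_univ_succ] at hl
    simp only [← Fin.succ_castSucc, hh, mul_zero, zero_mul, Finset.sum_const_zero, add_zero,
      Fin.succAbove_zero, Fin.val_zero, Fin.castSucc_zero] at hl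
    exact nonneg_of_mul_nonneg_left hl hint
  rw [Phi_expand]
  refine Finset.sum_nonneg fun j _ => ?_
  have hP := hpos (fun i => p.succAbove (j.succAbove i))
    ((Fin.strictMono_succAbove p).comp (Fin.strictMono_succAbove j))
  refine mul_nonneg ?_ hP.le
  rcases Fin.eq_zero_or_eq_succ (p.succAbove j) with hq | ⟨q, hq⟩
  · have hj : j = 0 := by
      rw [← Fin.succAbove_ne_zero_zero hp0] at hq
      exact Fin.succAbove_right_injective hq
    rw [hq, hj]
    simpa using hl'
  · rcases Fin.eq_castSucc_or_eq_last q with ⟨r, rfl⟩ | rfl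
    · rw [hq, hh]; simp
    · have hj : j = Fin.last n := by
        rw [Fin.succ_last, ← Fin.succAbove_ne_last_last hpl] at hq
        exact Fin.succAbove_right_injective hq
      rw [hq, hj, Fin.succ_last, Fin.val_last, ← two_mul, pow_mul]
      simpa using h0'

theorem Phi_chain {n m : ℕ} (H : Set ℝ) (ω : Fin n → ℝ → ℝ) (hω : IsPosChebyshev ω H)
    (g : ℝ → ℝ) (x : Fin (m + 1) → ℝ) (hx : StrictMono x) (hxH : ∀ i, x i ∈ H)
    (hw : ∀ (i : ℕ) (hi : i + n < m + 1), 0 ≤ Phi (Fin.snoc ω g : Fin (n + 1) → ℝ → ℝ)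
      (fun j : Fin (n + 1) => x ⟨i + j.1, by have := j.2; omega⟩)) :
    ∀ (s : ℕ) (idx : Fin (n + 1) → Fin (m + 1)), StrictMono idx →
      (idx (Fin.last n)).1 ≤ (idx 0).1 + s →
      0 ≤ Phi (Fin.snoc ω g : Fin (n + 1) → ℝ → ℝ) (fun j => x (idx j)) := by
  intro s
  induction s with
  | zero =>
    intro idx hidx hs
    have h0 : ∀ j : Fin (n + 1), (idx j).1 = (idx 0).1 + j.1 := by
      have hle : idx 0 = idx (Fin.last n) :=
        le_antisymm (hidx.monotone (Fin.zero_le _)) (by simpa using hs)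
      have hn : (0 : Fin (n + 1)) = Fin.last n := hidx.injective hle
      have hn' : n = 0 := by simpa using (congrArg Fin.val hn).symm
      subst hn'
      intro j
      have : j = 0 := by ext; have := j.2; simp
      subst this; simp
    have hlast := h0 (Fin.last n)
    have h2 := (idx (Fin.last n)).2
    rw [Fin.val_last] at hlast
    have := hw (idx 0).1 (by omega)
    convert this using 4 with j
    all_goals exact Fin.ext (h0 _)
  | succ s ih =>
    intro idx hidx hs
    by_cases hgap : ∃ j : Fin n, (idx j.castSucc).1 + 1 < (idx j.succ).1
    · obtain ⟨j, hj⟩ := hgap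
      let k : Fin (m + 1) := ⟨(idx j.castSucc).1 + 1, by have := (idx j.succ).2; omega⟩
      let p : Fin (n + 2) := j.succ.castSucc
      let z : Fin (n + 2) → Fin (m + 1) := p.insertNth k idx
      have hzp : z p = k := by simp [z]
      have hzs : ∀ i, z (p.succAbove i) = idx i := by intro i; simp [z]
      have hz : StrictMono z := by
        intro a b hab
        rcases Fin.eq_self_or_eq_succAbove p a with hap | ⟨a, rfl⟩
        · rw [hap] at hab ⊢
          rcases Fin.eq_self_or_eq_succAbove p b with hbp | ⟨b, rfl⟩
          · rw [hbp] at hab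
            exact absurd hab (lt_irrefl _)
          · rw [hzp, hzs]
            have hb : j.succ ≤ b := by
              by_contra hcon
              have := Fin.succAbove_of_castSucc_lt p b (by simpa only [p, Fin.castSucc_lt_castSucc_iff, not_le] using hcon)
              rw [this] at hab
              simp only [p, Fin.castSucc_lt_castSucc_iff] at hab
              exact hcon hab.le
            have := hidx.monotone hb
            rw [Fin.le_def] at this
            rw [Fin.lt_def]
            simp only [k]
            omega
        · rcases Fin.eq_self_or_eq_succAbove p b with hbp | ⟨b, rfl⟩
          · rw [hbp] at hab ⊢
            rw [hzp, hzs]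
            have hb : a ≤ j.castSucc := by
              by_contra hcon
              have h3 : p ≤ a.castSucc := by
                simp only [p, Fin.le_def, Fin.lt_def, not_le, Fin.val_castSucc, Fin.val_succ] at hcon ⊢
                omega
              rw [Fin.succAbove_of_le_castSucc p a h3, Fin.lt_def] at hab
              rw [Fin.le_def] at h3
              simp only [Fin.val_castSucc, Fin.val_succ] at hab h3
              omega
            have := hidx.monotone hb
            rw [Fin.le_def] at this
            rw [Fin.lt_def]
            simp only [k]
            omega
          · rw [hzs, hzs]
            exact hidx ((Fin.strictMono_succAbove p).lt_iff_lt.1 hab)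
      have hp0 : p ≠ 0 := by simp [p, Fin.ext_iff]
      have hpl : p ≠ Fin.last (n + 1) := (Fin.castSucc_lt_last _).ne
      have e0 : z 0 = idx 0 := by rw [← hzs 0, Fin.succAbove_ne_zero_zero hp0]
      have el : z (Fin.last _) = idx (Fin.last _) := by
        rw [← hzs (Fin.last n), Fin.succAbove_ne_last_last hpl]
      have := Phi_step H ω hω g (fun i => x (z i)) (hx.comp hz) (fun _ => hxH _) p hp0 hpl
        (ih (fun i => z i.succ) (hz.comp Fin.strictMono_succ) (by
          have : z 0 < z (Fin.succ 0) := hz (Fin.succ_pos _)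
          rw [Fin.lt_def, e0] at this
          rw [Fin.succ_last, el]; omega))
        (ih (fun i => z i.castSucc) (hz.comp Fin.strictMono_castSucc) (by
          have : z (Fin.last n).castSucc < z (Fin.last _) := hz (Fin.castSucc_lt_last _)
          rw [Fin.lt_def, el] at this
          rw [Fin.castSucc_zero, e0]; omega))
      simpa only [hzs] using this
    · push Not at hgap
      have h0 : ∀ j : Fin (n + 1), (idx j).1 = (idx 0).1 + j.1 := by
        intro j
        induction j using Fin.induction with
        | zero => simp
        | succ j ihj =>
          have h1 := hgap j
          have h2 : idx j.castSucc < idx j.succ := hidx Fin.castSucc_lt_succ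
          rw [Fin.lt_def] at h2
          simp only [Fin.val_castSucc, Fin.val_succ] at *
          omega
      have hlast := h0 (Fin.last n)
      have h2 := (idx (Fin.last n)).2
      rw [Fin.val_last] at hlast
      have := hw (idx 0).1 (by omega)
      convert this using 4 with j
      all_goals exact Fin.ext (h0 _)

/-- **Generalized Chain Inequality.** For `x₀ < ⋯ < x_m` in `H`, any strictly increasing
choice of indices `i₀ < ⋯ < iₙ` and any function `f`, the divided difference
`[x_{i₀},…,x_{iₙ}; f]_{ω*}` lies between the minimum and the maximum of the divided
differences on the consecutive windows `x_i,…,x_{i+n}`, `0 ≤ i ≤ m−n`. -/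
theorem divDiff_chain_inequality
    (n : ℕ) (hn : 0 < n) (H : Set ℝ) (hH : (↑(n + 2) : ℕ∞) ≤ H.encard)
    (ω : Fin n → ℝ → ℝ) (ω' : ℝ → ℝ)
    (hω : IsPosChebyshev ω H) (hωs : IsPosChebyshev (Fin.snoc ω ω') H)
    (m : ℕ) (hnm : n ≤ m) (hm : (↑(m + 1) : ℕ∞) ≤ H.encard)
    (x : Fin (m + 1) → ℝ) (hx : StrictMono x) (hxH : ∀ i, x i ∈ H)
    (idx : Fin (n + 1) → Fin (m + 1)) (hidx : StrictMono idx) (f : ℝ → ℝ) :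
    Finset.univ.inf' ⟨0, Finset.mem_univ 0⟩
        (fun i : Fin (m - n + 1) => divDiff ω ω' f (fun j : Fin (n + 1) =>
          x ⟨i.1 + j.1, by have h1 := i.2; have h2 := j.2; omega⟩)) ≤
      divDiff ω ω' f (fun j => x (idx j)) ∧
    divDiff ω ω' f (fun j => x (idx j)) ≤
      Finset.univ.sup' ⟨0, Finset.mem_univ 0⟩
        (fun i : Fin (m - n + 1) => divDiff ω ω' f (fun j : Fin (n + 1) =>
          x ⟨i.1 + j.1, by have h1 := i.2; have h2 := j.2; omega⟩)) := by
  have hposs : ∀ e : Fin (n + 1) → Fin (m + 1), StrictMono e →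
      0 < Phi (Fin.snoc ω ω' : Fin (n + 1) → ℝ → ℝ) (fun j => x (e j)) :=
    fun e he => hωs _ (hx.comp he) fun _ => hxH _
  have hposw : ∀ (i : ℕ) (hi : i + n < m + 1),
      0 < Phi (Fin.snoc ω ω' : Fin (n + 1) → ℝ → ℝ)
      (fun j : Fin (n + 1) => x ⟨i + j.1, by have := j.2; omega⟩) := by
    intro i hi
    refine hposs (fun j => ⟨i + j.1, by have := j.2; omega⟩) fun a b hab => ?_
    rw [Fin.lt_def] at hab ⊢
    simpa using hab
  set D : Fin (m - n + 1) → ℝ := fun i : Fin (m - n + 1) => divDiff ω ω' f (fun j : Fin (n + 1) =>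
          x ⟨i.1 + j.1, by have h1 := i.2; have h2 := j.2; omega⟩) with hD
  have hne : (Finset.univ : Finset (Fin (m - n + 1))).Nonempty := ⟨0, Finset.mem_univ 0⟩
  constructor
  · set c := Finset.univ.inf' hne D with hc
    have := Phi_chain H ω hω (fun t => 1 * f t - c * ω' t) x hx hxH (fun i hi => by
      have h1 := Finset.inf'_le D (Finset.mem_univ (⟨i, by omega⟩ : Fin (m - n + 1)))
      rw [← hc] at h1
      simp only [hD] at h1
      unfold divDiff at h1
      rw [le_div_iff₀ (hposw i hi)] at h1
      rw [Phi_sub_smul]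
      linarith) m idx hidx (by omega)
    rw [Phi_sub_smul] at this
    unfold divDiff
    rw [le_div_iff₀ (hposs idx hidx)]
    linarith
  · set c := Finset.univ.sup' hne D with hc
    have := Phi_chain H ω hω (fun t => c * ω' t - 1 * f t) x hx hxH (fun i hi => by
      have h1 := Finset.le_sup' D (Finset.mem_univ (⟨i, by omega⟩ : Fin (m - n + 1)))
      rw [← hc] at h1
      simp only [hD] at h1
      unfold divDiff at h1
      rw [div_le_iff₀ (hposw i hi)] at h1
      rw [Phi_sub_smul]
      linarith) m idx hidx (by omega)
    rw [Phi_sub_smul] at this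
    unfold divDiff
    rw [div_le_iff₀ (hposs idx hidx)]
    linarith
end
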